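/- Let α, β, γ, δ ∈ {0,1,…,5} with α, δ ∈ {0,5}. There exists a 5-L(2,1)-labelling L of the gadget G_5 with L(u) = α, L(a_u) = β, L(a_v) = γ, L(v) = δ if and only if the following conditions hold: if (α,δ) = (0,0) then (β,γ) ∈ {(2,5),(5,2),(3,5),(5,3)}; if (α,δ) = (5,5) then (β,γ) ∈ {(3,0),(0,3),(2,0),(0,2)}; if (α,δ) = (0,5) then (β,γ) = (4,1); if (α,δ) = (5,0) then (β,γ) = (1,4). -/

import Mathlib

/-- For an integer `k`, a `k`-L(2,1)-labelling of a graph `G` is a map from the vertices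
to `{0,1,…,k}` such that labels of adjacent vertices differ by at least `2` and vertices
at distance exactly `2` get distinct labels. -/
def IsL21Labelling {V : Type*} (G : SimpleGraph V) (k : ℕ) (L : V → ℕ) : Prop :=
  (∀ v, L v ≤ k) ∧
  (∀ x y, G.Adj x y → 2 ≤ |(L x : ℤ) - (L y : ℤ)|) ∧
  (∀ x y, G.dist x y = 2 → L x ≠ L y)

/-- The vertices of the gadget `G₅`. -/
inductive G5V | u | au | av | v | bu | bv | c | d | e1 | e2 | e3 | f | g1 | g2
deriving DecidableEq

open G5V in
/-- The gadget `G₅`. -/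
def G5 : SimpleGraph G5V :=
  SimpleGraph.fromRel (fun x y => (x, y) ∈
    [(u,au),(au,av),(av,v),(au,bu),(av,bv),(bu,c),(bv,c),(c,d),
     (d,e1),(d,e2),(d,e3),(e1,f),(e2,f),(f,g1),(f,g2)])

open G5V in
/-- Explicit neighbour test for the gadget. -/
theorem G5_adj_iff (x y : G5V) : G5.Adj x y ↔ x ≠ y ∧
    ((x, y) ∈ [(u,au),(au,av),(av,v),(au,bu),(av,bv),(bu,c),(bv,c),(c,d),
     (d,e1),(d,e2),(d,e3),(e1,f),(e2,f),(f,g1),(f,g2)] ∨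
     (y, x) ∈ [(u,au),(au,av),(av,v),(au,bu),(av,bv),(bu,c),(bv,c),(c,d),
     (d,e1),(d,e2),(d,e3),(e1,f),(e2,f),(f,g1),(f,g2)]) := by
  unfold G5
  exact SimpleGraph.fromRel_adj _ _ _

instance G5_decAdj : DecidableRel G5.Adj := fun x y =>
  decidable_of_iff _ (G5_adj_iff x y).symm

open G5V in
instance G5V_fintype : Fintype G5V where
  elems := {u, au, av, v, bu, bv, c, d, e1, e2, e3, f, g1, g2}
  complete := by intro x; cases x <;> decide

/-- Two distinct neighbours of a common vertex get distinct labels. -/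
theorem L21_common {V : Type*} {G : SimpleGraph V} {k : ℕ} {L : V → ℕ}
    (h : IsL21Labelling G k L) {x y : V} (z : V) (hxz : G.Adj x z) (hzy : G.Adj z y)
    (hxy : x ≠ y) : L x ≠ L y := by
  by_cases ha : G.Adj x y
  · intro e
    have := h.2.1 x y ha
    rw [e] at this
    simp at this
  · apply h.2.2
    have h1 : G.dist x y ≤ 2 :=
      SimpleGraph.dist_le (SimpleGraph.Walk.cons hxz (SimpleGraph.Walk.cons hzy .nil))
    have hr : G.Reachable x y := hxz.reachable.trans hzy.reachable
    have h0 : G.dist x y ≠ 0 := fun e => hxy (hr.dist_eq_zero_iff.1 e)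
    have h2 : G.dist x y ≠ 1 := fun e => ha (SimpleGraph.dist_eq_one_iff_adj.1 e)
    omega

theorem exists_common_of_dist {V : Type*} {G : SimpleGraph V} {x y : V}
    (h : G.dist x y = 2) : x ≠ y ∧ ∃ z, G.Adj x z ∧ G.Adj z y := by
  constructor
  · rintro rfl
    simp at h
  · have hr : G.Reachable x y := by
      by_contra hn
      rw [SimpleGraph.dist_eq_zero_of_not_reachable hn] at h
      omega
    obtain ⟨p, hp⟩ := hr.exists_walk_length_eq_dist
    rw [h] at hp
    match p, hp with
    | .cons h1 (.cons h2 .nil), _ => exact ⟨_, h1, h2⟩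

/-- A labelling given by its list of values. -/
def lab (l0 l1 l2 l3 l4 l5 l6 l7 l8 l9 l10 l11 l12 l13 : ℕ) : G5V → ℕ
  | .u => l0 | .au => l1 | .av => l2 | .v => l3 | .bu => l4 | .bv => l5 | .c => l6
  | .d => l7 | .e1 => l8 | .e2 => l9 | .e3 => l10 | .f => l11 | .g1 => l12 | .g2 => l13

theorem isL21_of_check (L : G5V → ℕ) (h1 : ∀ v, L v ≤ 5)
    (h2 : ∀ x y, G5.Adj x y → L x + 2 ≤ L y ∨ L y + 2 ≤ L x)
    (h3 : ∀ z x, G5.Adj x z → ∀ y, G5.Adj z y → x ≠ y → L x ≠ L y) :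
    IsL21Labelling G5 5 L := by
  refine ⟨h1, fun x y h => ?_, fun x y h => ?_⟩
  · rw [le_abs]
    have := h2 x y h
    omega
  · obtain ⟨hn, z, hxz, hzy⟩ := exists_common_of_dist h
    exact h3 z x hxz y hzy hn

/-- A vertex with four pairwise different neighbours has an extreme label. -/
theorem extreme (f a b c d : ℕ) (hf : f ≤ 5) (ha : a ≤ 5) (hb : b ≤ 5) (hc : c ≤ 5) (hd : d ≤ 5)
    (fa : f + 2 ≤ a ∨ a + 2 ≤ f) (fb : f + 2 ≤ b ∨ b + 2 ≤ f)
    (fc : f + 2 ≤ c ∨ c + 2 ≤ f) (fd : f + 2 ≤ d ∨ d + 2 ≤ f)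
    (ab : a ≠ b) (ac : a ≠ c) (ad : a ≠ d) (bc : b ≠ c) (bd : b ≠ d) (cd : c ≠ d) :
    f = 0 ∨ f = 5 := by
  by_contra hn
  interval_cases f <;> omega

theorem far_label (d f c a b : ℕ) (hd : d = 0 ∨ d = 5) (hf : f = 0 ∨ f = 5) (hdf : d ≠ f)
    (hc : c ≤ 5) (ha : a ≤ 5) (hb : b ≤ 5) (cd : c + 2 ≤ d ∨ d + 2 ≤ c)
    (da : d + 2 ≤ a ∨ a + 2 ≤ d) (db : d + 2 ≤ b ∨ b + 2 ≤ d)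
    (af : a + 2 ≤ f ∨ f + 2 ≤ a) (bf : b + 2 ≤ f ∨ f + 2 ≤ b)
    (ca : c ≠ a) (cb : c ≠ b) (ab : a ≠ b) : (d = 0 ∧ 4 ≤ c) ∨ (d = 5 ∧ c ≤ 1) := by
  rcases hd with rfl | rfl <;> rcases hf with rfl | rfl <;> omega

set_option synthInstance.maxSize 100000 in
set_option synthInstance.maxHeartbeats 2000000 in
set_option maxHeartbeats 2000000 in
set_option maxRecDepth 100000 in
/-- Finite check on the square part of the gadget. -/
theorem core_fin : ∀ u : Fin 6, (u.val = 0 ∨ u.val = 5) → ∀ v : Fin 6, (v.val = 0 ∨ v.val = 5) → ∀ a : Fin 6, (u.val + 2 ≤ a.val ∨ a.val + 2 ≤ u.val) →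
    ∀ b : Fin 6, (a.val + 2 ≤ b.val ∨ b.val + 2 ≤ a.val) → (b.val + 2 ≤ v.val ∨ v.val + 2 ≤ b.val) → u.val ≠ b.val → a.val ≠ v.val →
    ∀ x : Fin 6, (a.val + 2 ≤ x.val ∨ x.val + 2 ≤ a.val) → u.val ≠ x.val → b.val ≠ x.val →
    ∀ y : Fin 6, (b.val + 2 ≤ y.val ∨ y.val + 2 ≤ b.val) → v.val ≠ y.val → a.val ≠ y.val → x.val ≠ y.val →
    ∀ c : Fin 6, (x.val + 2 ≤ c.val ∨ c.val + 2 ≤ x.val) → (y.val + 2 ≤ c.val ∨ c.val + 2 ≤ y.val) → a.val ≠ c.val → b.val ≠ c.val →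
    ∀ d : Fin 6, (d.val = 0 ∨ d.val = 5) → ((d.val = 0 ∧ 4 ≤ c.val) ∨ (d.val = 5 ∧ c.val ≤ 1)) → x.val ≠ d.val → y.val ≠ d.val →
    (u.val = 0 ∧ v.val = 0 ∧ ((a.val = 2 ∧ b.val = 5) ∨ (a.val = 5 ∧ b.val = 2) ∨ (a.val = 3 ∧ b.val = 5) ∨ (a.val = 5 ∧ b.val = 3))) ∨
    (u.val = 5 ∧ v.val = 5 ∧ ((a.val = 3 ∧ b.val = 0) ∨ (a.val = 0 ∧ b.val = 3) ∨ (a.val = 2 ∧ b.val = 0) ∨ (a.val = 0 ∧ b.val = 2))) ∨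
    (u.val = 0 ∧ v.val = 5 ∧ a.val = 4 ∧ b.val = 1) ∨
    (u.val = 5 ∧ v.val = 0 ∧ a.val = 1 ∧ b.val = 4) := by
  decide +kernel

theorem core : ∀ u < 6, (u = 0 ∨ u = 5) → ∀ v < 6, (v = 0 ∨ v = 5) → ∀ a < 6, (u + 2 ≤ a ∨ a + 2 ≤ u) →
    ∀ b < 6, (a + 2 ≤ b ∨ b + 2 ≤ a) → (b + 2 ≤ v ∨ v + 2 ≤ b) → u ≠ b → a ≠ v →
    ∀ x < 6, (a + 2 ≤ x ∨ x + 2 ≤ a) → u ≠ x → b ≠ x →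
    ∀ y < 6, (b + 2 ≤ y ∨ y + 2 ≤ b) → v ≠ y → a ≠ y → x ≠ y →
    ∀ c < 6, (x + 2 ≤ c ∨ c + 2 ≤ x) → (y + 2 ≤ c ∨ c + 2 ≤ y) → a ≠ c → b ≠ c →
    ∀ d < 6, (d = 0 ∨ d = 5) → ((d = 0 ∧ 4 ≤ c) ∨ (d = 5 ∧ c ≤ 1)) → x ≠ d → y ≠ d →
    (u = 0 ∧ v = 0 ∧ ((a = 2 ∧ b = 5) ∨ (a = 5 ∧ b = 2) ∨ (a = 3 ∧ b = 5) ∨ (a = 5 ∧ b = 3))) ∨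
    (u = 5 ∧ v = 5 ∧ ((a = 3 ∧ b = 0) ∨ (a = 0 ∧ b = 3) ∨ (a = 2 ∧ b = 0) ∨ (a = 0 ∧ b = 2))) ∨
    (u = 0 ∧ v = 5 ∧ a = 4 ∧ b = 1) ∨
    (u = 5 ∧ v = 0 ∧ a = 1 ∧ b = 4) := by
  intro u hu h1 v hv h2 a ha h3 b hb h4 h5 h6 h7 x hx h8 h9 h10 y hy h11 h12 h13 h14 c hc h15 h16
    h17 h18 d hd h19 h20 h21 h22
  exact core_fin ⟨u, hu⟩ h1 ⟨v, hv⟩ h2 ⟨a, ha⟩ h3 ⟨b, hb⟩ h4 h5 h6 h7 ⟨x, hx⟩ h8 h9 h10 ⟨y, hy⟩ h11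
    h12 h13 h14 ⟨c, hc⟩ h15 h16 h17 h18 ⟨d, hd⟩ h19 h20 h21 h22

open G5V in
theorem forward (L : G5V → ℕ) (h : IsL21Labelling G5 5 L)
    (hu : L u = 0 ∨ L u = 5) (hv : L v = 0 ∨ L v = 5) :
    (L u = 0 ∧ L v = 0 ∧ ((L au = 2 ∧ L av = 5) ∨ (L au = 5 ∧ L av = 2) ∨
      (L au = 3 ∧ L av = 5) ∨ (L au = 5 ∧ L av = 3))) ∨
    (L u = 5 ∧ L v = 5 ∧ ((L au = 3 ∧ L av = 0) ∨ (L au = 0 ∧ L av = 3) ∨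
      (L au = 2 ∧ L av = 0) ∨ (L au = 0 ∧ L av = 2))) ∨
    (L u = 0 ∧ L v = 5 ∧ L au = 4 ∧ L av = 1) ∨
    (L u = 5 ∧ L v = 0 ∧ L au = 1 ∧ L av = 4) := by
  have adj : ∀ x y, G5.Adj x y → L x + 2 ≤ L y ∨ L y + 2 ≤ L x := by
    intro x y hxy
    have := h.2.1 x y hxy
    rw [le_abs] at this
    omega
  have l_u := h.1 u
  have l_au := h.1 au
  have l_av := h.1 av
  have l_v := h.1 v
  have l_bu := h.1 bu
  have l_bv := h.1 bv
  have l_c := h.1 c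
  have l_d := h.1 d
  have l_e1 := h.1 e1
  have l_e2 := h.1 e2
  have l_e3 := h.1 e3
  have l_f := h.1 f
  have l_g1 := h.1 g1
  have l_g2 := h.1 g2
  have a_u_au := adj u au (by decide)
  have a_au_av := adj au av (by decide)
  have a_av_v := adj av v (by decide)
  have a_au_bu := adj au bu (by decide)
  have a_av_bv := adj av bv (by decide)
  have a_bu_c := adj bu c (by decide)
  have a_bv_c := adj bv c (by decide)
  have a_c_d := adj c d (by decide)
  have a_d_e1 := adj d e1 (by decide)
  have a_d_e2 := adj d e2 (by decide)
  have a_d_e3 := adj d e3 (by decide)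
  have a_e1_f := adj e1 f (by decide)
  have a_e2_f := adj e2 f (by decide)
  have a_f_g1 := adj f g1 (by decide)
  have a_f_g2 := adj f g2 (by decide)
  have n_u_av := L21_common h (x := u) (y := av) au (by decide) (by decide) (by decide)
  have n_u_bu := L21_common h (x := u) (y := bu) au (by decide) (by decide) (by decide)
  have n_au_v := L21_common h (x := au) (y := v) av (by decide) (by decide) (by decide)
  have n_au_bv := L21_common h (x := au) (y := bv) av (by decide) (by decide) (by decide)
  have n_au_c := L21_common h (x := au) (y := c) bu (by decide) (by decide) (by decide)
  have n_av_bu := L21_common h (x := av) (y := bu) au (by decide) (by decide) (by decide)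
  have n_av_c := L21_common h (x := av) (y := c) bv (by decide) (by decide) (by decide)
  have n_v_bv := L21_common h (x := v) (y := bv) av (by decide) (by decide) (by decide)
  have n_bu_bv := L21_common h (x := bu) (y := bv) c (by decide) (by decide) (by decide)
  have n_bu_d := L21_common h (x := bu) (y := d) c (by decide) (by decide) (by decide)
  have n_bv_d := L21_common h (x := bv) (y := d) c (by decide) (by decide) (by decide)
  have n_c_e1 := L21_common h (x := c) (y := e1) d (by decide) (by decide) (by decide)
  have n_c_e2 := L21_common h (x := c) (y := e2) d (by decide) (by decide) (by decide)
  have n_c_e3 := L21_common h (x := c) (y := e3) d (by decide) (by decide) (by decide)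
  have n_d_f := L21_common h (x := d) (y := f) e1 (by decide) (by decide) (by decide)
  have n_e1_e2 := L21_common h (x := e1) (y := e2) d (by decide) (by decide) (by decide)
  have n_e1_e3 := L21_common h (x := e1) (y := e3) d (by decide) (by decide) (by decide)
  have n_e1_g1 := L21_common h (x := e1) (y := g1) f (by decide) (by decide) (by decide)
  have n_e1_g2 := L21_common h (x := e1) (y := g2) f (by decide) (by decide) (by decide)
  have n_e2_e3 := L21_common h (x := e2) (y := e3) d (by decide) (by decide) (by decide)
  have n_e2_g1 := L21_common h (x := e2) (y := g1) f (by decide) (by decide) (by decide)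
  have n_e2_g2 := L21_common h (x := e2) (y := g2) f (by decide) (by decide) (by decide)
  have n_g1_g2 := L21_common h (x := g1) (y := g2) f (by decide) (by decide) (by decide)
  clear adj h
  generalize L u = x_u at *
  generalize L au = x_au at *
  generalize L av = x_av at *
  generalize L v = x_v at *
  generalize L bu = x_bu at *
  generalize L bv = x_bv at *
  generalize L c = x_c at *
  generalize L d = x_d at *
  generalize L e1 = x_e1 at *
  generalize L e2 = x_e2 at *
  generalize L e3 = x_e3 at *
  generalize L f = x_f at *
  generalize L g1 = x_g1 at *
  generalize L g2 = x_g2 at *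
  have hf : x_f = 0 ∨ x_f = 5 := extreme x_f x_e1 x_e2 x_g1 x_g2 l_f l_e1 l_e2 l_g1 l_g2
    a_e1_f.symm a_e2_f.symm a_f_g1 a_f_g2 n_e1_e2 n_e1_g1 n_e1_g2 n_e2_g1 n_e2_g2 n_g1_g2
  have hd : x_d = 0 ∨ x_d = 5 := extreme x_d x_c x_e1 x_e2 x_e3 l_d l_c l_e1 l_e2 l_e3
    a_c_d.symm a_d_e1 a_d_e2 a_d_e3 n_c_e1 n_c_e2 n_c_e3 n_e1_e2 n_e1_e3 n_e2_e3
  have hc := far_label x_d x_f x_c x_e1 x_e2 hd hf n_d_f l_c l_e1 l_e2 a_c_d a_d_e1 a_d_e2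
    a_e1_f a_e2_f n_c_e1 n_c_e2 n_e1_e2
  exact core x_u (by omega) hu x_v (by omega) hv x_au (by omega) a_u_au x_av (by omega)
    a_au_av a_av_v n_u_av n_au_v x_bu (by omega) a_au_bu n_u_bu n_av_bu x_bv (by omega) a_av_bv
    n_v_bv n_au_bv n_bu_bv x_c (by omega) a_bu_c a_bv_c n_au_c n_av_c x_d (by omega) hd hc
    n_bu_d n_bv_d

/-- For `α, β, γ, δ ∈ {0,…,5}` with `α, δ ∈ {0,5}`, there is a `5`-L(2,1)-labelling `L`
of `G₅` with `L u = α`, `L a_u = β`, `L a_v = γ`, `L v = δ` if and only if: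
if `(α,δ) = (0,0)` then `(β,γ) ∈ {(2,5),(5,2),(3,5),(5,3)}`;
if `(α,δ) = (5,5)` then `(β,γ) ∈ {(3,0),(0,3),(2,0),(0,2)}`;
if `(α,δ) = (0,5)` then `(β,γ) = (4,1)`;
if `(α,δ) = (5,0)` then `(β,γ) = (1,4)`. -/
theorem stmt_8 (α β γ δ : ℕ) (hα : α = 0 ∨ α = 5) (hδ : δ = 0 ∨ δ = 5)
    (hβ : β ≤ 5) (hγ : γ ≤ 5) :
    (∃ L : G5V → ℕ, IsL21Labelling G5 5 L ∧
      L G5V.u = α ∧ L G5V.au = β ∧ L G5V.av = γ ∧ L G5V.v = δ) ↔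
    ((α = 0 ∧ δ = 0 → (β, γ) ∈ ({(2,5),(5,2),(3,5),(5,3)} : Set (ℕ × ℕ))) ∧
     (α = 5 ∧ δ = 5 → (β, γ) ∈ ({(3,0),(0,3),(2,0),(0,2)} : Set (ℕ × ℕ))) ∧
     (α = 0 ∧ δ = 5 → (β, γ) = (4,1)) ∧
     (α = 5 ∧ δ = 0 → (β, γ) = (1,4))) := by
  constructor
  · rintro ⟨L, hL, rfl, rfl, rfl, rfl⟩
    have := forward L hL hα hδ
    simp only [Set.mem_insert_iff, Set.mem_singleton_iff, Prod.mk.injEq]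
    omega
  · intro h
    simp only [Set.mem_insert_iff, Set.mem_singleton_iff, Prod.mk.injEq] at h
    obtain ⟨h1, h2, h3, h4⟩ := h
    rcases hα with rfl | rfl <;> rcases hδ with rfl | rfl
    · rcases h1 ⟨rfl, rfl⟩ with ⟨rfl, rfl⟩ | ⟨rfl, rfl⟩ | ⟨rfl, rfl⟩ | ⟨rfl, rfl⟩
      · refine ⟨lab 0 2 5 0 4 3 0 5 2 3 1 0 4 5, isL21_of_check _ (by decide) (by decide) (by decide +kernel), rfl, rfl, rfl, rfl⟩
      · refine ⟨lab 0 5 2 0 3 4 0 5 2 3 1 0 4 5, isL21_of_check _ (by decide) (by decide) (by decide +kernel), rfl, rfl, rfl, rfl⟩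
      · refine ⟨lab 0 3 5 0 1 2 4 0 2 3 5 5 0 1, isL21_of_check _ (by decide) (by decide) (by decide +kernel), rfl, rfl, rfl, rfl⟩
      · refine ⟨lab 0 5 3 0 2 1 4 0 2 3 5 5 0 1, isL21_of_check _ (by decide) (by decide) (by decide +kernel), rfl, rfl, rfl, rfl⟩
    · rcases h3 ⟨rfl, rfl⟩ with ⟨rfl, rfl⟩
      · refine ⟨lab 0 4 1 5 2 3 0 5 2 3 1 0 4 5, isL21_of_check _ (by decide) (by decide) (by decide +kernel), rfl, rfl, rfl, rfl⟩
    · rcases h4 ⟨rfl, rfl⟩ with ⟨rfl, rfl⟩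
      · refine ⟨lab 5 1 4 0 3 2 0 5 2 3 1 0 4 5, isL21_of_check _ (by decide) (by decide) (by decide +kernel), rfl, rfl, rfl, rfl⟩
    · rcases h2 ⟨rfl, rfl⟩ with ⟨rfl, rfl⟩ | ⟨rfl, rfl⟩ | ⟨rfl, rfl⟩ | ⟨rfl, rfl⟩
      · refine ⟨lab 5 3 0 5 1 2 4 0 2 3 5 5 0 1, isL21_of_check _ (by decide) (by decide) (by decide +kernel), rfl, rfl, rfl, rfl⟩
      · refine ⟨lab 5 0 3 5 2 1 4 0 2 3 5 5 0 1, isL21_of_check _ (by decide) (by decide) (by decide +kernel), rfl, rfl, rfl, rfl⟩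
      · refine ⟨lab 5 2 0 5 4 3 1 5 2 3 0 0 4 5, isL21_of_check _ (by decide) (by decide) (by decide +kernel), rfl, rfl, rfl, rfl⟩
      · refine ⟨lab 5 0 2 5 3 4 1 5 2 3 0 0 4 5, isL21_of_check _ (by decide) (by decide) (by decide +kernel), rfl, rfl, rfl, rfl⟩
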